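/- Let F ∈ ℝ[x_1,…,x_n] be a nonzero homogeneous polynomial of degree r ≥ 2 all of whose coefficients are nonnegative, and let a ∈ (ℝ_{>0})^n. If F is strictly log-concave at a, i.e., the matrix (−F·H_F + (∇F)ᵀ(∇F)) evaluated at a is positive definite, then the Hessian matrix H_F evaluated at a has exactly n−1 negative eigenvalues and exactly one positive eigenvalue; in particular (−1)^{n−1}·det(H_F)(a) > 0. -/

import Mathlib

/-!
Write `f = F(a)`, `g = ∇F(a)` and `H = H_F(a)`; nonnegative coefficients give `f > 0`. Euler's
identity for `F` and for its partial derivatives gives `aᵀ H a = r (r - 1) f > 0`, while on the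
hyperplane `g · v = 0` the strict log-concavity form reduces to `-f vᵀ H v`, so `H` is negative
definite there. Hence the quadratic form of `H` has a positive line and a negative definite
hyperplane, and Sylvester's law of inertia, read off in an eigenbasis of `H`, counts the signs of
the eigenvalues. The determinant is their product.
-/

open MvPolynomial

open Matrix QuadraticMap

section LorentzianSignature

variable {𝕜 M : Type*} [Field 𝕜] [LinearOrder 𝕜] [AddCommGroup M] [Module 𝕜 M]
  [FiniteDimensional 𝕜 M] {Q : QuadraticForm 𝕜 M}

lemma finrank_le_sigNeg_add_one [IsOrderedAddMonoid 𝕜] {φ : Module.Dual 𝕜 M}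
    (hneg : ∀ v, v ≠ 0 → φ v = 0 → Q v < 0) :
    Module.finrank 𝕜 M ≤ sigNeg Q + 1 := by
  have hker : ((-Q).restrict φ.ker).PosDef := fun v hv => by
    simpa using hneg v (by simpa using hv) v.2
  have hrange : Module.finrank 𝕜 φ.range ≤ 1 := by
    simpa using φ.range.finrank_le
  have hsum := φ.finrank_range_add_finrank_ker
  have := le_sigNeg_of_negDef Q hker
  omega

variable [IsStrictOrderedRing 𝕜]

lemma one_le_sigPos {x : M} (hx : 0 < Q x) : 1 ≤ sigPos Q := by
  have hx0 : x ≠ 0 := by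
    rintro rfl
    simp at hx
  have hspan : (Q.restrict (𝕜 ∙ x)).PosDef := by
    rintro ⟨v, hv⟩ hv0
    obtain ⟨c, rfl⟩ := Submodule.mem_span_singleton.mp hv
    have hc : c ≠ 0 := by
      rintro rfl
      simp at hv0
    simpa [QuadraticMap.map_smul] using mul_pos (mul_self_pos.mpr hc) hx
  simpa [finrank_span_singleton hx0] using le_sigPos_of_posDef Q hspan

lemma sigPos_eq_one_and_sigNeg_add_one_eq_finrank {x : M} (hpos : 0 < Q x) {φ : Module.Dual 𝕜 M}
    (hneg : ∀ v, v ≠ 0 → φ v = 0 → Q v < 0) :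
    sigPos Q = 1 ∧ sigNeg Q + 1 = Module.finrank 𝕜 M := by
  have h₁ := one_le_sigPos hpos
  have h₂ := finrank_le_sigNeg_add_one hneg
  have h₃ := QuadraticForm.sigPos_add_sigNeg_add_radical (Q := Q)
  omega

end LorentzianSignature

section Eigenvalues

lemma neg_one_pow_card_filter_neg_mul_prod {ι R : Type*} [CommRing R] [LinearOrder R]
    [IsStrictOrderedRing R] (s : Finset ι) (w : ι → R) :
    (-1) ^ (s.filter fun i => w i < 0).card * ∏ i ∈ s, w i = |∏ i ∈ s, w i| := by
  calc (-1) ^ (s.filter fun i => w i < 0).card * ∏ i ∈ s, w i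
      = ∏ i ∈ s, (if w i < 0 then -1 else 1) * w i := by
        rw [Finset.prod_mul_distrib, Finset.prod_ite]
        simp
    _ = ∏ i ∈ s, |w i| := Finset.prod_congr rfl fun i _ => by
        split_ifs with h
        · rw [abs_of_neg h, neg_one_mul]
        · rw [abs_of_nonneg (not_lt.mp h), one_mul]
    _ = |∏ i ∈ s, w i| := (Finset.abs_prod s w).symm

variable {n : Type*} [Fintype n] [DecidableEq n]

lemma toQuadraticForm'_apply {R : Type*} [CommRing R] (A : Matrix n n R) (v : n → R) :
    A.toQuadraticForm' v = v ⬝ᵥ A *ᵥ v := by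
  simp [toQuadraticForm', toLinearMap₂'_apply']

lemma associated_toQuadraticForm'_apply {R : Type*} [CommRing R] [Invertible (2 : R)]
    {A : Matrix n n R} (hA : A.IsSymm) (v w : n → R) :
    associated A.toQuadraticForm' v w = v ⬝ᵥ A *ᵥ w := by
  have hcomm (x y : n → R) : toLinearMap₂' R A x y = toLinearMap₂' R A y x := by
    rw [toLinearMap₂'_apply', toLinearMap₂'_apply', dotProduct_mulVec, ← mulVec_transpose, hA.eq,
      dotProduct_comm]
  rw [toQuadraticForm', associated_left_inverse R hcomm, toLinearMap₂'_apply']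

variable {A : Matrix n n ℝ}

lemma eigenvectorBasis_dotProduct_mulVec (hA : A.IsHermitian) (i j : n) :
    hA.eigenvectorBasis i ⬝ᵥ A *ᵥ hA.eigenvectorBasis j =
      if i = j then hA.eigenvalues j else 0 := by
  have horth := orthonormal_iff_ite.mp hA.eigenvectorBasis.orthonormal j i
  rw [EuclideanSpace.inner_eq_star_dotProduct, star_trivial] at horth
  rw [hA.mulVec_eigenvectorBasis, dotProduct_smul, horth]
  simp [eq_comm]

lemma equivalent_weightedSumSquares_eigenvalues (hA : A.IsHermitian) :
    A.toQuadraticForm'.Equivalent (weightedSumSquares ℝ hA.eigenvalues) := by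
  let v := hA.eigenvectorBasis.toBasis.map (WithLp.linearEquiv 2 ℝ (n → ℝ))
  have hv (i : n) : v i = hA.eigenvectorBasis i := by simp [v]
  have horth : (associated (R := ℝ) A.toQuadraticForm').IsOrthoᵢ v := fun i j hij => by
    rw [Function.onFun, associated_toQuadraticForm'_apply (isHermitian_iff_isSymm.mp hA), hv, hv,
      eigenvectorBasis_dotProduct_mulVec, if_neg hij]
  have hrepr : A.toQuadraticForm'.basisRepr v = weightedSumSquares ℝ hA.eigenvalues := by
    rw [basisRepr_eq_of_iIsOrtho _ v horth]
    simp [toQuadraticForm'_apply, hv, eigenvectorBasis_dotProduct_mulVec]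
  exact hrepr ▸ ⟨A.toQuadraticForm'.isometryEquivBasisRepr v⟩

lemma sigPos_toQuadraticForm' (hA : A.IsHermitian) :
    sigPos A.toQuadraticForm' = (Finset.univ.filter fun i => 0 < hA.eigenvalues i).card := by
  rw [QuadraticForm.sigPos_of_equiv_weightedSumSquares
    (equivalent_weightedSumSquares_eigenvalues hA),
    Set.ncard_eq_toFinset_card', Set.toFinset_ofPred]

lemma sigNeg_toQuadraticForm' (hA : A.IsHermitian) :
    sigNeg A.toQuadraticForm' = (Finset.univ.filter fun i => hA.eigenvalues i < 0).card := by
  rw [QuadraticForm.sigNeg_of_equiv_weightedSumSquares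
    (equivalent_weightedSumSquares_eigenvalues hA),
    Set.ncard_eq_toFinset_card', Set.toFinset_ofPred]

lemma neg_one_pow_sigNeg_mul_det (hA : A.IsHermitian) :
    (-1) ^ sigNeg A.toQuadraticForm' * A.det = |A.det| := by
  have hdet : A.det = ∏ i, hA.eigenvalues i := hA.det_eq_prod_eigenvalues
  rw [hdet, sigNeg_toQuadraticForm' hA, neg_one_pow_card_filter_neg_mul_prod]

lemma det_ne_zero_of_sigPos_add_sigNeg (hA : A.IsHermitian)
    (h : sigPos A.toQuadraticForm' + sigNeg A.toQuadraticForm' = Fintype.card n) : A.det ≠ 0 := by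
  rw [sigPos_toQuadraticForm' hA, sigNeg_toQuadraticForm' hA, ← Finset.card_union_of_disjoint
    (Finset.disjoint_filter.mpr fun i _ => not_lt_of_gt), ← Finset.filter_or,
    ← Finset.card_univ, Finset.card_filter_eq_iff] at h
  have hdet : A.det = ∏ i, hA.eigenvalues i := hA.det_eq_prod_eigenvalues
  rw [hdet]
  exact Finset.prod_ne_zero_iff.mpr fun i hi => (h i hi).elim ne_of_gt ne_of_lt

end Eigenvalues

lemma dotProduct_mulVec_neg_of_posDef_neg_smul_add_vecMulVec {n R : Type*} [Fintype n]
    [CommRing R] [LinearOrder R] [IsStrictOrderedRing R] [StarRing R] [TrivialStar R]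
    {A : Matrix n n R} {c : R} (hc : 0 ≤ c) {g v : n → R}
    (hA : (-c • A + vecMulVec g g).PosDef) (hv : v ≠ 0) (hgv : g ⬝ᵥ v = 0) :
    v ⬝ᵥ A *ᵥ v < 0 := by
  have hpos : 0 < -c * (v ⬝ᵥ A *ᵥ v) := by
    simpa [add_mulVec, vecMulVec_mulVec, hgv, neg_mulVec, smul_mulVec]
      using hA.dotProduct_mulVec_pos hv
  exact neg_of_mul_neg_right (by linarith) hc

section Polynomial

variable {σ R : Type*}

lemma eval_pos_of_coeff_nonneg [CommSemiring R] [PartialOrder R] [IsStrictOrderedRing R]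
    {F : MvPolynomial σ R} (hF : F ≠ 0) (hcoeff : ∀ m, 0 ≤ F.coeff m) {a : σ → R}
    (ha : ∀ i, 0 < a i) : 0 < eval a F := by
  rw [eval_eq]
  refine Finset.sum_pos (fun d hd => ?_) (by simpa using hF)
  exact mul_pos ((hcoeff d).lt_of_ne' (mem_support_iff.mp hd))
    (Finset.prod_pos fun i _ => pow_pos (ha i) _)

section CommSemiring

variable [CommSemiring R]

/-- The gradient `∇F(a)` of a polynomial `F` at a point `a`, in terms of formal derivatives. -/
noncomputable def gradientAt (F : MvPolynomial σ R) (a : σ → R) : σ → R :=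
  fun i => eval a (pderiv i F)

/-- The Hessian matrix `H_F(a)` of a polynomial `F` at a point `a`, in terms of formal
derivatives. -/
noncomputable def hessianAt (F : MvPolynomial σ R) (a : σ → R) : Matrix σ σ R :=
  .of fun i j => eval a (pderiv i (pderiv j F))

lemma pderiv_pderiv_comm (i j : σ) (F : MvPolynomial σ R) :
    pderiv i (pderiv j F) = pderiv j (pderiv i F) := by
  classical
  ext m
  simp only [coeff_pderiv, Finsupp.add_apply, Finsupp.single_apply, add_right_comm]
  obtain rfl | hij := eq_or_ne i j
  · simp
  · simp [hij, hij.symm, mul_right_comm]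

lemma isSymm_hessianAt (F : MvPolynomial σ R) (a : σ → R) : (hessianAt F a).IsSymm :=
  .ext fun i j => congrArg (eval a) (pderiv_pderiv_comm j i F)

variable [Fintype σ] {F : MvPolynomial σ R} {r : ℕ}

lemma dotProduct_gradientAt_of_isHomogeneous (hF : F.IsHomogeneous r) (a : σ → R) :
    a ⬝ᵥ gradientAt F a = r * eval a F := by
  simpa [dotProduct, gradientAt] using congrArg (eval a) hF.sum_X_mul_pderiv

lemma vecMul_hessianAt_of_isHomogeneous (hF : F.IsHomogeneous r) (a : σ → R) :
    a ᵥ* hessianAt F a = ((r - 1 : ℕ) : R) • gradientAt F a :=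
  funext fun j => dotProduct_gradientAt_of_isHomogeneous (hF.pderiv (i := j)) a

lemma dotProduct_hessianAt_mulVec_of_isHomogeneous (hF : F.IsHomogeneous r) (a : σ → R) :
    a ⬝ᵥ hessianAt F a *ᵥ a = (r - 1 : ℕ) * (r * eval a F) := by
  rw [dotProduct_mulVec, vecMul_hessianAt_of_isHomogeneous hF, smul_dotProduct, dotProduct_comm,
    dotProduct_gradientAt_of_isHomogeneous hF, smul_eq_mul]

end CommSemiring

/-- Strict log-concavity of `F` at `a`: the matrix `(-F·H_F + (∇F)ᵀ(∇F))(a)` is positive definite.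
Where `F(a) ≠ 0`, this matrix is `-F(a)²` times the Hessian of `log |F|`. -/
def StrictlyLogConcaveAt (F : MvPolynomial σ ℝ) (a : σ → ℝ) : Prop :=
  (-eval a F • hessianAt F a + vecMulVec (gradientAt F a) (gradientAt F a)).PosDef

lemma signature_hessianAt_of_strictlyLogConcaveAt [Fintype σ] [DecidableEq σ]
    {F : MvPolynomial σ ℝ} {r : ℕ} (hr : 2 ≤ r) (hhom : F.IsHomogeneous r) {a : σ → ℝ}
    (hFa : 0 < eval a F) (hF : StrictlyLogConcaveAt F a) :
    sigPos (hessianAt F a).toQuadraticForm' = 1 ∧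
      sigNeg (hessianAt F a).toQuadraticForm' + 1 = Fintype.card σ := by
  have hpos : 0 < (hessianAt F a).toQuadraticForm' a := by
    rw [toQuadraticForm'_apply, dotProduct_hessianAt_mulVec_of_isHomogeneous hhom]
    have : 0 < r - 1 := by omega
    positivity
  have hneg (v : σ → ℝ) (hv : v ≠ 0) (hgv : dotProductEquiv ℝ σ (gradientAt F a) v = 0) :
      (hessianAt F a).toQuadraticForm' v < 0 := by
    rw [toQuadraticForm'_apply]
    exact dotProduct_mulVec_neg_of_posDef_neg_smul_add_vecMulVec hFa.le hF hv hgv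
  simpa using sigPos_eq_one_and_sigNeg_add_one_eq_finrank hpos hneg

theorem hessian_signature_of_strictly_logConcave_general [Fintype σ] [DecidableEq σ]
    {F : MvPolynomial σ ℝ} {r : ℕ} (hr : 2 ≤ r) (hhom : F.IsHomogeneous r) {a : σ → ℝ}
    (hFa : 0 < eval a F) (hF : StrictlyLogConcaveAt F a) :
    (∃ hherm : (hessianAt F a).IsHermitian,
      (Finset.univ.filter fun i => hherm.eigenvalues i < 0).card = Fintype.card σ - 1 ∧
      (Finset.univ.filter fun i => 0 < hherm.eigenvalues i).card = 1) ∧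
    0 < (-1 : ℝ) ^ (Fintype.card σ - 1) * (hessianAt F a).det := by
  have hherm := isHermitian_iff_isSymm.mpr (isSymm_hessianAt F a)
  obtain ⟨hsigPos, hsigNeg⟩ := signature_hessianAt_of_strictlyLogConcaveAt hr hhom hFa hF
  have hcard : sigNeg (hessianAt F a).toQuadraticForm' = Fintype.card σ - 1 := by omega
  have hdet : (hessianAt F a).det ≠ 0 :=
    det_ne_zero_of_sigPos_add_sigNeg hherm (by omega)
  refine ⟨⟨hherm, ?_, ?_⟩, ?_⟩
  · rw [← sigNeg_toQuadraticForm', hcard]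
  · rw [← sigPos_toQuadraticForm', hsigPos]
  · rw [← hcard, neg_one_pow_sigNeg_mul_det hherm]
    exact abs_pos.mpr hdet

end Polynomial

/-- if a nonzero homogeneous polynomial `F` of degree `r ≥ 2` with nonnegative
coefficients is strictly log-concave at a point `a` of the open positive orthant (i.e.
`(-F·H_F + (∇F)ᵀ(∇F))(a)` is positive definite), then the Hessian `H_F(a)` has exactly `n - 1`
negative eigenvalues and exactly one positive eigenvalue; in particular
`(-1)^(n-1)·det(H_F)(a) > 0`. -/
theorem hessian_signature_of_strictly_logConcave (n r : ℕ) (hr : 2 ≤ r)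
    (F : MvPolynomial (Fin n) ℝ) (hF0 : F ≠ 0) (hhom : F.IsHomogeneous r)
    (hcoeff : ∀ m : (Fin n) →₀ ℕ, 0 ≤ F.coeff m)
    (a : Fin n → ℝ) (ha : ∀ i, 0 < a i)
    (hpd : (Matrix.of fun i j : Fin n =>
        -(eval a F) * eval a (pderiv i (pderiv j F))
          + eval a (pderiv i F) * eval a (pderiv j F)).PosDef)
    (H : Matrix (Fin n) (Fin n) ℝ)
    (hH : H = Matrix.of fun i j => eval a (pderiv i (pderiv j F))) :
    (∃ hherm : H.IsHermitian,
      (Finset.univ.filter fun i => hherm.eigenvalues i < 0).card = n - 1 ∧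
      (Finset.univ.filter fun i => 0 < hherm.eigenvalues i).card = 1) ∧
    0 < (-1 : ℝ) ^ (n - 1) * H.det := by
  obtain rfl : H = hessianAt F a := hH
  have hF := eval_pos_of_coeff_nonneg hF0 hcoeff ha
  simpa only [Fintype.card_fin] using
    hessian_signature_of_strictly_logConcave_general hr hhom hF hpd
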